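/- Let k ≥ 3 be a positive integer such that k−1 is a power of the characteristic p of F_q, and let n = k(k−1)+1. Let a, b ∈ F_{q^n} with N_{q^n/q}(a) = (−1)^{k−1} and b = −∏_{i=0}^{k−1} a^{q^{ik+1}}. Let h be a positive integer, N = n·h, and let V be the set of roots of P(x) = x^{q^k} − b·x^q − a·x in F_{q^N}. Then V is a k-dimensional F_q-subspace of F_{q^N}; the orbit C = {αV : α ∈ F_{q^N}, α ≠ 0} consists of exactly (q^N−1)/(q−1) distinct subspaces; and the minimum of d(U,W) = dim_{F_q}U + dim_{F_q}W − 2·dim_{F_q}(U ∩ W) over all pairs of distinct subspaces U, W ∈ C equals 2k−2. -/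

import Mathlib

open Polynomial Pointwise

lemma aux_mem_range {K F : Type*} [Field K] [Field F] [Fintype K] [Algebra K F]
    (x : F) (hx : x ^ Fintype.card K = x) : ∃ c : K, algebraMap K F c = x := by
  classical
  by_contra hcon
  push Not at hcon
  have hq := Fintype.one_lt_card (α := K)
  have hne := FiniteField.X_pow_card_sub_X_ne_zero F hq
  have hsub : insert x (Finset.univ.image (algebraMap K F))
      ⊆ (X ^ Fintype.card K - X : Polynomial F).roots.toFinset := by
    intro y hy
    rw [Multiset.mem_toFinset, mem_roots hne]
    rw [Finset.mem_insert, Finset.mem_image] at hy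
    rcases hy with rfl | ⟨c, -, rfl⟩
    · simp [hx]
    · simp [← map_pow, FiniteField.pow_card]
  have h1 := Finset.card_le_card hsub
  rw [Finset.card_insert_of_notMem (by simpa using hcon),
    Finset.card_image_of_injective _ (algebraMap K F).injective, Finset.card_univ] at h1
  have h2 := Multiset.toFinset_card_le (X ^ Fintype.card K - X : Polynomial F).roots
  have h3 := card_roots' (X ^ Fintype.card K - X : Polynomial F)
  rw [FiniteField.X_pow_card_sub_X_natDegree_eq F hq] at h3
  omega

lemma aux_dvd {K : Type*} [Field K] (p : ℕ) [Fact p.Prime] [CharP K p] (k m : ℕ)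
    (hk : k = p ^ m + 1) :
    (X ^ k + X + 1 : K[X]) ∣ X ^ (k * (k - 1) + 1) - 1 := by
  have hs : k - 1 = p ^ m := by omega
  have h1 : (X ^ (k * (k - 1) + 1) : K[X]) = X * ((X ^ k + X + 1) - (X + 1)) ^ p ^ m := by
    rw [pow_succ, pow_mul, hs]; ring
  have h2 : (X ^ k : K[X]) = X ^ p ^ m * X := by rw [hk, pow_succ]
  have hpos : p ^ m ≠ 0 := pow_ne_zero _ (Fact.out : p.Prime).ne_zero
  have h3 : (X ^ (k * (k - 1) + 1) - 1 : K[X])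
      = X * (X ^ k + X + 1) ^ p ^ m - (X ^ k + X + 1) := by
    rw [h1, sub_pow_char_pow, add_pow_char_pow X 1, one_pow]
    rw [h2]; ring
  rw [h3]
  exact dvd_sub (Dvd.dvd.mul_left (dvd_pow_self _ hpos) _) dvd_rfl

lemma aux_frob {K F : Type*} [Field K] [Field F] [Fintype K] [Algebra K F] (j : ℕ) (x : F) :
    ((FiniteField.frobeniusAlgHom K F).toLinearMap ^ j) x = x ^ Fintype.card K ^ j := by
  induction j with
  | zero => simp
  | succ j ih =>
    rw [pow_succ', Module.End.mul_apply, ih]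
    simp [pow_succ, pow_mul]

lemma aux_fix {K F : Type*} [Field K] [Field F] [Fintype K] [Algebra K F]
    (p : ℕ) [Fact p.Prime] [CharP K p] (k m : ℕ)
    (hk : k = p ^ m + 1) (x : F)
    (hx : x ^ Fintype.card K ^ k + x ^ Fintype.card K + x = 0) :
    x ^ Fintype.card K ^ (k * (k - 1) + 1) = x := by
  obtain ⟨g, hg⟩ := aux_dvd (K := K) p k m hk
  have h := congrArg (fun f => aeval (FiniteField.frobeniusAlgHom K F).toLinearMap f x) hg
  simp only [mul_comm _ g] at h
  simp only [map_mul, map_sub, map_add, map_pow, aeval_X, map_one, Module.End.mul_apply,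
    LinearMap.sub_apply, LinearMap.add_apply, aux_frob, Module.End.one_apply] at h
  have h1 : (FiniteField.frobeniusAlgHom K F).toLinearMap x = x ^ Fintype.card K := by simp
  rw [h1, ← map_add, ← map_add, hx, map_zero] at h
  exact sub_eq_zero.mp h

lemma aux_pow_h {F : Type*} [Field F] (q n h : ℕ) (x : F) (hx : x ^ q ^ n = x) :
    x ^ q ^ (n * h) = x := by
  induction h with
  | zero => simp
  | succ h ih => rw [Nat.mul_succ, pow_add, pow_mul, ih, hx]

/-- root subspace -/
def auxW (K F : Type*) [Field K] [Field F] [Fintype K] [Algebra K F] (k : ℕ) :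
    Submodule K F :=
  LinearMap.ker ((FiniteField.frobeniusAlgHom K F).toLinearMap ^ k
    + (FiniteField.frobeniusAlgHom K F).toLinearMap + 1)

lemma mem_auxW {K F : Type*} [Field K] [Field F] [Fintype K] [Algebra K F] (k : ℕ) (x : F) :
    x ∈ auxW K F k ↔ x ^ Fintype.card K ^ k + x ^ Fintype.card K + x = 0 := by
  have h1 : (FiniteField.frobeniusAlgHom K F).toLinearMap x = x ^ Fintype.card K := by simp
  rw [auxW, LinearMap.mem_ker]
  simp only [LinearMap.add_apply, aux_frob, Module.End.one_apply, h1]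

lemma aux_card {K M : Type*} [Field K] [Field M] [Fintype K] [Fintype M] [Algebra K M]
    (p : ℕ) [Fact p.Prime] [CharP K p] (k m h : ℕ) (hk3 : 3 ≤ k)
    (hk : k = p ^ m + 1) (hM : Fintype.card M = Fintype.card K ^ ((k * (k - 1) + 1) * h)) :
    Nat.card (auxW K M k) = Fintype.card K ^ k := by
  classical
  set q := Fintype.card K with hq
  have hq1 : 1 < q := Fintype.one_lt_card
  have hqK : (q : K) = 0 := by rw [hq]; exact FiniteField.cast_card_eq_zero K
  let Ω := AlgebraicClosure M
  have hqM : (q : Ω) = 0 := by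
    have := congrArg (algebraMap K Ω) hqK
    simpa using this
  let f : Polynomial Ω := X ^ q ^ k + X ^ q + X
  have hlt : q < q ^ k := by
    calc q = q ^ 1 := (pow_one q).symm
      _ < q ^ k := Nat.pow_lt_pow_right hq1 (by omega)
  have hdeg : f.natDegree = q ^ k := by
    have e : f = X ^ q ^ k + (X ^ q + X) := by simp only [f]; ring
    rw [e, natDegree_add_eq_left_of_natDegree_lt]
    · simp
    · rw [natDegree_X_pow]
      refine lt_of_le_of_lt (natDegree_add_le _ _) ?_
      simp only [natDegree_X_pow, natDegree_X]
      omega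
  have hder : derivative f = 1 := by
    simp [f, derivative_X_pow, hqM, show k ≠ 0 by omega]
  have hsep : f.Separable := by
    rw [separable_def, hder]; exact isCoprime_one_right
  have hroots : Fintype.card (f.rootSet Ω) = q ^ k := by
    rw [← hdeg]
    exact card_rootSet_eq_natDegree hsep (IsAlgClosed.splits _)
  have hf0 : f ≠ 0 := by
    intro h0; rw [h0] at hdeg; simp at hdeg; omega
  have himg : (algebraMap M Ω) '' (auxW K M k : Set M) = f.rootSet Ω := by
    ext y
    rw [mem_rootSet]
    constructor
    · rintro ⟨x, hx, rfl⟩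
      refine ⟨hf0, ?_⟩
      rw [SetLike.mem_coe, mem_auxW] at hx
      have := congrArg (algebraMap M Ω) hx
      simpa [f] using this
    · rintro ⟨-, hy⟩
      have hy' : y ^ q ^ k + y ^ q + y = 0 := by simpa [f] using hy
      have h1 := aux_fix (K := K) p k m hk y hy'
      have h2 := aux_pow_h q _ h y h1
      rw [← hM] at h2
      obtain ⟨x, rfl⟩ := aux_mem_range (K := M) y h2
      refine ⟨x, ?_, rfl⟩
      rw [SetLike.mem_coe, mem_auxW]
      apply (algebraMap M Ω).injective
      simpa using hy'
  have := Nat.card_image_of_injective (algebraMap M Ω).injective (auxW K M k : Set M)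
  rw [himg, Nat.card_eq_fintype_card, hroots] at this
  exact this.symm

lemma aux_finrank {K M : Type*} [Field K] [Field M] [Fintype K] [Fintype M] [Algebra K M]
    (p : ℕ) [Fact p.Prime] [CharP K p] (k m h : ℕ) (hk3 : 3 ≤ k)
    (hk : k = p ^ m + 1) (hM : Fintype.card M = Fintype.card K ^ ((k * (k - 1) + 1) * h)) :
    Module.finrank K (auxW K M k) = k := by
  have h1 := aux_card (K := K) (M := M) p k m h hk3 hk hM
  have h2 := Module.natCard_eq_pow_finrank (K := K) (V := auxW K M k)
  rw [h1, Nat.card_eq_fintype_card] at h2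
  exact (Nat.pow_right_injective (Fintype.one_lt_card (α := K)) h2).symm

lemma aux_key {K M : Type*} [Field K] [Field M] [Fintype K] [Algebra K M] (k : ℕ)
    (α x y : M) (hx0 : x ≠ 0) (hx : x ∈ auxW K M k) (hy : y ∈ auxW K M k)
    (hax : α * x ∈ auxW K M k) (hay : α * y ∈ auxW K M k) :
    (∃ c : K, algebraMap K M c = α) ∨ ∃ c : K, c • x = y := by
  rw [mem_auxW] at *
  set q := Fintype.card K with hq
  rw [mul_pow, mul_pow] at hax hay
  have ex : (α ^ q ^ k - α ^ q) * x ^ q = - (α ^ q ^ k - α) * x := by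
    linear_combination α ^ q ^ k * hx - hax
  have ey : (α ^ q ^ k - α ^ q) * y ^ q = - (α ^ q ^ k - α) * y := by
    linear_combination α ^ q ^ k * hy - hay
  by_cases hA : α ^ q ^ k - α ^ q = 0
  · left
    rw [hA, zero_mul] at ex
    have h1 : α ^ q ^ k - α = 0 := by
      rcases mul_eq_zero.mp ex.symm with h | h
      · exact neg_eq_zero.mp h
      · exact absurd h hx0
    exact aux_mem_range (K := K) α (by linear_combination h1 - hA)
  · right
    have h1 : (y / x) ^ q = y / x := by
      rw [div_pow, div_eq_div_iff (pow_ne_zero _ hx0) hx0]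
      apply mul_left_cancel₀ hA
      linear_combination x * ey - y * ex
    obtain ⟨c, hc⟩ := aux_mem_range (K := K) (y / x) h1
    refine ⟨c, ?_⟩
    rw [Algebra.smul_def, hc, div_mul_cancel₀ _ hx0]

lemma aux_neg {F : Type*} [Field F] (p : ℕ) [Fact p.Prime] [CharP F p] (m : ℕ) :
    (-1 : F) ^ p ^ m = -1 := by
  have := sub_pow_char_pow (R := F) (p := p) (n := m) 0 1
  have hpos : p ^ m ≠ 0 := pow_ne_zero _ (Fact.out : p.Prime).ne_zero
  rw [zero_pow hpos, one_pow, zero_sub] at this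
  exact this

lemma aux_h90 {L : Type*} [Field L] [Fintype L] (q k n : ℕ) (hq : 1 < q)
    (hn : n = k * (k - 1) + 1) (hL : Fintype.card L = q ^ n)
    (u : L) (hu : u ^ ((q ^ n - 1) / (q - 1)) = 1) :
    ∃ c : L, c ≠ 0 ∧ c ^ q ^ k = u * c := by
  classical
  have hdiv : (q - 1) ∣ q ^ n - 1 := by simpa using Nat.sub_dvd_pow_sub_pow q 1 n
  obtain ⟨e, he⟩ := hdiv
  have hqn : 1 < q ^ n := Nat.one_lt_pow (by omega) hq
  have he0 : 0 < e := by
    rcases Nat.eq_zero_or_pos e with h | h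
    · subst h; omega
    · exact h
  rw [he, Nat.mul_div_cancel_left _ (by omega : 0 < q - 1)] at hu
  have hu0 : u ≠ 0 := by
    rintro rfl; rw [zero_pow he0.ne'] at hu; exact zero_ne_one hu
  obtain ⟨g, hg⟩ := IsCyclic.exists_generator (α := Lˣ)
  obtain ⟨j, hj⟩ := Submonoid.mem_powers_iff _ _ |>.mp
    ((mem_powers_iff_mem_zpowers).mpr (hg (Units.mk0 u hu0)))
  have hord : orderOf g = (q - 1) * e := by
    rw [orderOf_eq_card_of_forall_mem_zpowers hg, Nat.card_eq_fintype_card,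
      Fintype.card_units, hL, he]
  have h1 : g ^ (j * e) = 1 := by
    rw [pow_mul, hj]; ext; simpa using hu
  have h2 := orderOf_dvd_of_pow_eq_one h1
  rw [hord] at h2
  obtain ⟨i, hi⟩ := Nat.dvd_of_mul_dvd_mul_right he0 h2
  have hgu : (g : L) ^ ((q - 1) * i) = u := by
    rw [← hi]; have := congrArg Units.val hj; simpa using this
  set c : L := (g : L) ^ i with hc
  have hc0 : c ≠ 0 := pow_ne_zero _ g.ne_zero
  have hcq : c ^ q = u * c := by
    rw [← hgu, mul_comm (q - 1) i, pow_mul, ← hc, ← pow_succ, Nat.sub_add_cancel (by omega)]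
  have hcn : c ^ q ^ n = c := by rw [← hL]; exact FiniteField.pow_card c
  have hd : (q ^ k - 1) ∣ (q ^ k) ^ (k - 1) - 1 := by
    simpa using Nat.sub_dvd_pow_sub_pow (q ^ k) 1 (k - 1)
  obtain ⟨t, ht⟩ := hd
  have hQ : 1 ≤ (q ^ k) ^ (k - 1) := Nat.one_le_iff_ne_zero.mpr (by positivity)
  have hk1 : 1 ≤ q ^ k := Nat.one_le_iff_ne_zero.mpr (by positivity)
  have hexp : q ^ n = q * ((q ^ k - 1) * t) + q := by
    rw [← ht, hn, pow_succ, pow_mul]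
    obtain ⟨s, hs⟩ := Nat.exists_eq_add_of_le hQ
    rw [hs, Nat.add_sub_cancel_left]; ring
  -- d = (c⁻¹)^(q t)
  refine ⟨(c ^ (q * t))⁻¹, inv_ne_zero (pow_ne_zero _ hc0), ?_⟩
  have h3 : c ^ (q * ((q ^ k - 1) * t)) * c ^ q = c := by rw [← pow_add, ← hexp, hcn]
  have h4 : c ^ (q * ((q ^ k - 1) * t)) * u = 1 := by
    rw [hcq, ← mul_assoc] at h3
    exact mul_right_cancel₀ hc0 (by rw [h3, one_mul])
  have h5 : (c ^ (q * t)) ^ q ^ k = c ^ (q * ((q ^ k - 1) * t)) * c ^ (q * t) := by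
    rw [← pow_mul, ← pow_add]; congr 1
    obtain ⟨s, hs⟩ := Nat.exists_eq_add_of_le hk1
    rw [hs, Nat.add_sub_cancel_left]; ring
  have hcd : c ^ (q * t) ≠ 0 := pow_ne_zero _ hc0
  have hce : c ^ (q * ((q ^ k - 1) * t)) ≠ 0 := pow_ne_zero _ hc0
  rw [inv_pow, h5, mul_inv, inv_eq_of_mul_eq_one_right h4]

lemma aux_norm {L : Type*} [Field L] [Fintype L] (p m' m q k n : ℕ) [Fact p.Prime] [CharP L p]
    (hm' : 0 < m') (hqp : q = p ^ m') (hk : k = p ^ m + 1) (hk3 : 3 ≤ k)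
    (hn : n = k * (k - 1) + 1) (hL : Fintype.card L = q ^ n)
    (a b : L) (ha : a ^ ((q ^ n - 1) / (q - 1)) = (-1 : L) ^ (k - 1))
    (hb : b = - ∏ i ∈ Finset.range k, a ^ q ^ (i * k + 1)) :
    ∃ c : L, c ≠ 0 ∧ c ^ q ^ k = -(a * c) ∧ b * c ^ q = a * c := by
  have hp := (Fact.out : p.Prime)
  have hq : 1 < q := by rw [hqp]; exact Nat.one_lt_pow hm'.ne' hp.one_lt
  have hs : k - 1 = p ^ m := by omega
  have hneg : ∀ j, (-1 : L) ^ q ^ j = -1 := by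
    intro j; rw [hqp, ← pow_mul]; exact aux_neg p _
  have hnegk : (-1 : L) ^ k = 1 := by
    rw [hk, pow_succ, aux_neg p m]; ring
  have hodd : (-1 : L) ^ ((q ^ n - 1) / (q - 1)) = -1 := by
    have hnodd : (-1 : L) ^ n = -1 := by
      rw [hn, pow_succ, pow_mul, hnegk]; simp
    rw [← Nat.geomSum_eq hq, ← Finset.prod_pow_eq_pow_sum]
    simp [hneg, hnodd]
  have hu : (-a) ^ ((q ^ n - 1) / (q - 1)) = 1 := by
    rw [neg_pow, hodd, ha, hs, aux_neg p m]; ring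
  obtain ⟨c, hc0, hc⟩ := aux_h90 q k n hq hn hL (-a) hu
  have hc' : c ^ q ^ k = -(a * c) := by rw [hc]; ring
  refine ⟨c, hc0, hc', ?_⟩
  have hind : ∀ j, (∏ i ∈ Finset.range j, a ^ q ^ (i * k + 1)) * c ^ q
      = (-1) ^ j * c ^ q ^ (j * k + 1) := by
    intro j
    induction j with
    | zero => simp
    | succ j ih =>
      have e : c ^ q ^ ((j + 1) * k + 1) = - (a ^ q ^ (j * k + 1) * c ^ q ^ (j * k + 1)) := by
        rw [show (j + 1) * k + 1 = k + (j * k + 1) by ring, pow_add q k, pow_mul, hc',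
          neg_pow, hneg, mul_pow]; ring
      rw [Finset.prod_range_succ, e]
      linear_combination a ^ q ^ (j * k + 1) * ih
  have hcn : c ^ q ^ n = c := by rw [← hL]; exact FiniteField.pow_card c
  have hfin : c ^ q ^ (k * k + 1) = -(a * c) := by
    have : k * k + 1 = n + k := by
      obtain ⟨s, rfl⟩ : ∃ s, k = s + 1 := ⟨k - 1, by omega⟩
      rw [hn, Nat.add_sub_cancel]; ring
    rw [this, pow_add, pow_mul, hcn, hc']
  have := hind k
  rw [hnegk, hfin] at this
  rw [hb]
  linear_combination -this

lemma aux_mem_smul {K M : Type*} [Field K] [Field M] [Algebra K M]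
    (α : Mˣ) (W : Submodule K M) (z : M) :
    z ∈ α • W ↔ ∃ w ∈ W, (α : M) * w = z :=
  Submodule.mem_smul_pointwise_iff_exists z (α : M) W

lemma aux_coe_smul {K M : Type*} [Field K] [Field M] [Algebra K M]
    (α : Mˣ) (W : Submodule K M) :
    ((α • W : Submodule K M) : Set M) = ((α : M) * ·) '' (W : Set M) := by
  ext z
  rw [SetLike.mem_coe, aux_mem_smul]
  rfl

lemma aux_smul_finrank {K M : Type*} [Field K] [Field M] [Algebra K M]
    (α : Mˣ) (W : Submodule K M) :
    Module.finrank K (α • W : Submodule K M) = Module.finrank K W :=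
  (Submodule.equivMapOfInjective (DistribSMul.toLinearMap K M α)
    (MulAction.injective α) W).finrank_eq.symm

theorem stmt_18 (p q : ℕ) (hp : p.Prime) (hq : ∃ m : ℕ, 0 < m ∧ q = p ^ m)
    (K L M : Type*) [Field K] [Field L] [Field M]
    [Fintype K] [Fintype L] [Fintype M]
    [Algebra K L] [Algebra L M] [Algebra K M] [IsScalarTower K L M]
    (hcardK : Fintype.card K = q)
    (k : ℕ) (hk : 3 ≤ k) (hkp : ∃ m : ℕ, k - 1 = p ^ m)
    (n : ℕ) (hnval : n = k * (k - 1) + 1) (hcardL : Fintype.card L = q ^ n)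
    (h N : ℕ) (hh : 0 < h) (hNval : N = n * h) (hcardM : Fintype.card M = q ^ N)
    (a b : L) (ha : a ^ ((q ^ n - 1) / (q - 1)) = (-1 : L) ^ (k - 1))
    (hb : b = - ∏ i ∈ Finset.range k, a ^ q ^ (i * k + 1))
    (V : Set M)
    (hV : V = {x : M | x ^ q ^ k - algebraMap L M b * x ^ q - algebraMap L M a * x = 0})
    (C : Set (Submodule K M))
    (hC : C = {W : Submodule K M | ∃ α : M, α ≠ 0 ∧ (W : Set M) = (α * ·) '' V}) :
    (∃ W : Submodule K M, (W : Set M) = V ∧ Module.finrank K W = k)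
      ∧ Nat.card C = (q ^ N - 1) / (q - 1)
      ∧ IsLeast {r : ℕ | ∃ U ∈ C, ∃ W ∈ C, U ≠ W ∧
          r = Module.finrank K U + Module.finrank K W
                - 2 * Module.finrank K (U ⊓ W : Submodule K M)}
        (2 * k - 2) := by
  classical
  obtain ⟨m', hm', hqp⟩ := hq
  obtain ⟨m, hm⟩ := hkp
  have hkm : k = p ^ m + 1 := by omega
  have : Fact p.Prime := ⟨hp⟩
  have : CharP K p := by
    obtain ⟨r, hr⟩ := CharP.exists K
    obtain ⟨j, hrp, hj⟩ := FiniteField.card K r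
    rw [hcardK, hqp] at hj
    have : p ∣ r ^ (j : ℕ) := hj ▸ dvd_pow_self p hm'.ne'
    have := (Nat.prime_dvd_prime_iff_eq hp hrp).mp (hp.dvd_of_dvd_pow this)
    rw [this]; exact hr
  have : CharP L p := charP_of_injective_algebraMap (algebraMap K L).injective p
  have hq1 : 1 < q := by rw [← hcardK]; exact Fintype.one_lt_card
  obtain ⟨c, hc0, hc1, hc2⟩ := aux_norm p m' m q k n hm' hqp hkm hk hnval hcardL a b ha hb
  set W0 : Submodule K M := auxW K M k with hW0
  have hr : Module.finrank K W0 = k :=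
    aux_finrank (K := K) p k m h hk hkm (by rw [hcardM, hNval, hnval, hcardK])
  set d : M := algebraMap L M c with hd
  have hd0 : d ≠ 0 := by simpa [hd] using hc0
  have hd1 : d ^ q ^ k = -(algebraMap L M a * d) := by
    simpa using congrArg (algebraMap L M) hc1
  have hd2 : algebraMap L M b * d ^ q = algebraMap L M a * d := by
    simpa using congrArg (algebraMap L M) hc2
  let D : Mˣ := Units.mk0 d hd0
  have hVD : ((D • W0 : Submodule K M) : Set M) = V := by
    ext x
    rw [SetLike.mem_coe, aux_mem_smul, hV]
    have hP : ∀ y : M, (d * y) ^ q ^ k - algebraMap L M b * (d * y) ^ q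
        - algebraMap L M a * (d * y) = d ^ q ^ k * (y ^ q ^ k + y ^ q + y) := by
      intro y
      rw [mul_pow, mul_pow]
      linear_combination (-y ^ q) * hd2 - (y ^ q + y) * hd1
    constructor
    · rintro ⟨y, hy, rfl⟩
      rw [hW0, mem_auxW, hcardK] at hy
      change (d * y) ^ q ^ k - algebraMap L M b * (d * y) ^ q
        - algebraMap L M a * (d * y) = 0
      rw [hP, hy, mul_zero]
    · intro hx
      have hxd : x = d * (x / d) := by field_simp
      refine ⟨x / d, ?_, hxd.symm⟩
      change x ^ q ^ k - algebraMap L M b * x ^ q - algebraMap L M a * x = 0 at hx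
      rw [hxd, hP] at hx
      rw [hW0, mem_auxW, hcardK]
      exact (mul_eq_zero.mp hx).resolve_left (pow_ne_zero _ hd0)
  have hCorb : C = MulAction.orbit Mˣ W0 := by
    ext W
    rw [hC]
    constructor
    · rintro ⟨α, hα, hW⟩
      refine ⟨Units.mk0 α hα * D, ?_⟩
      apply SetLike.coe_injective
      change ((Units.mk0 α hα * D) • W0 : Submodule K M) = (W : Set M)
      rw [hW, mul_smul, aux_coe_smul, hVD]
      rfl
    · rintro ⟨u, rfl⟩
      refine ⟨(u * D⁻¹ : Mˣ), Units.ne_zero _, ?_⟩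
      have : u • W0 = (u * D⁻¹) • D • W0 := by rw [← mul_smul]; simp
      change ((u • W0 : Submodule K M) : Set M) = _
      rw [this, aux_coe_smul, hVD]
  -- two independent vectors
  have hexy : ∃ x ∈ W0, ∃ y ∈ W0, x ≠ 0 ∧ y ≠ 0 ∧ ∀ c : K, c • x ≠ y := by
    have hne : W0 ≠ ⊥ := by
      intro h0; rw [h0, finrank_bot] at hr; omega
    obtain ⟨x, hx, hx0⟩ := Submodule.exists_mem_ne_zero_of_ne_bot hne
    by_contra hcon
    push Not at hcon
    have : Module.finrank K W0 ≤ 1 := by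
      apply finrank_le_one (⟨x, hx⟩ : W0)
      rintro ⟨y, hy⟩
      by_cases hy0 : y = 0
      · exact ⟨0, by ext; simp [hy0]⟩
      · obtain ⟨c, hc⟩ := hcon x hx y hy hx0 hy0
        exact ⟨c, by ext; simpa using hc⟩
    omega
  obtain ⟨x, hx, y, hy, hx0, hy0, hxy⟩ := hexy
  have hstab : ∀ α : Mˣ, α • W0 = W0 ↔ ∃ c : K, algebraMap K M c = α := by
    intro α
    constructor
    · intro hα
      have hmem : ∀ z ∈ W0, (α : M) * z ∈ W0 := by
        intro z hz
        have := (aux_mem_smul α W0 _).mpr ⟨z, hz, rfl⟩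
        rwa [hα] at this
      rcases aux_key k (α : M) x y hx0 hx hy (hmem x hx) (hmem y hy) with h | ⟨c, hc⟩
      · exact h
      · exact absurd hc (hxy c)
    · rintro ⟨c, hc⟩
      have hc0 : c ≠ 0 := by
        rintro rfl; rw [map_zero] at hc; exact α.ne_zero hc.symm
      ext z
      rw [aux_mem_smul]
      constructor
      · rintro ⟨w, hw, rfl⟩
        rw [← hc, ← Algebra.smul_def]
        exact W0.smul_mem c hw
      · intro hz
        refine ⟨c⁻¹ • z, W0.smul_mem _ hz, ?_⟩
        rw [← hc, ← Algebra.smul_def, smul_inv_smul₀ hc0]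
  refine ⟨⟨D • W0, hVD, by rw [aux_smul_finrank, hr]⟩, ?_, ?_⟩
  · have hst : MulAction.stabilizer Mˣ W0
        = (Units.map (algebraMap K M : K →* M)).range := by
      ext α
      rw [MulAction.mem_stabilizer_iff, hstab, MonoidHom.mem_range]
      constructor
      · rintro ⟨c, hc⟩
        have hc0 : c ≠ 0 := by
          rintro rfl; rw [map_zero] at hc; exact α.ne_zero hc.symm
        exact ⟨Units.mk0 c hc0, by ext; simpa using hc⟩
      · rintro ⟨c, rfl⟩
        exact ⟨c, by simp⟩
    have hcs : Nat.card (MulAction.stabilizer Mˣ W0) = q - 1 := by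
      rw [hst, ← hcardK, ← Fintype.card_units, ← Nat.card_eq_fintype_card]
      exact (Nat.card_congr (MonoidHom.ofInjective
        (Units.map_injective (algebraMap K M).injective)).toEquiv).symm
    have h1 := Nat.card_congr (MulAction.orbitProdStabilizerEquivGroup Mˣ W0)
    rw [Nat.card_prod, hcs, Nat.card_eq_fintype_card (α := Mˣ), Fintype.card_units, hcardM,
      ← hCorb] at h1
    rw [← h1, Nat.mul_div_cancel _ (by omega)]
  · have hle : ∀ α β : Mˣ, α • W0 ≠ β • W0 →
        Module.finrank K (α • W0 ⊓ β • W0 : Submodule K M) ≤ 1 := by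
      intro α β hne
      by_cases hbot : (α • W0 ⊓ β • W0 : Submodule K M) = ⊥
      · rw [hbot, finrank_bot]; omega
      obtain ⟨z, hz, hz0⟩ := Submodule.exists_mem_ne_zero_of_ne_bot hbot
      have hmem : ∀ w ∈ (α • W0 ⊓ β • W0 : Submodule K M),
          (↑(α⁻¹) : M) * w ∈ W0 ∧ (↑(β⁻¹ * α) : M) * ((↑(α⁻¹) : M) * w) ∈ W0 := by
        intro w hw
        obtain ⟨h1, h2⟩ := Submodule.mem_inf.mp hw
        obtain ⟨u, hu, rfl⟩ := (aux_mem_smul _ _ _).mp h1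
        obtain ⟨v, hv, hvu⟩ := (aux_mem_smul _ _ _).mp h2
        refine ⟨by simpa using hu, ?_⟩
        have : (↑(β⁻¹ * α) : M) * ((↑(α⁻¹) : M) * (α * u)) = v := by
          rw [← hvu]
          have := α.ne_zero
          have := β.ne_zero
          push_cast
          field_simp
        rw [this]; exact hv
      apply finrank_le_one (⟨z, hz⟩ : (α • W0 ⊓ β • W0 : Submodule K M))
      rintro ⟨w, hw⟩
      have hz1 := hmem z hz
      have hw1 := hmem w hw
      rcases aux_key k (↑(β⁻¹ * α) : M) _ _ (mul_ne_zero (Units.ne_zero _) hz0)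
        hz1.1 hw1.1 hz1.2 hw1.2 with h | ⟨c, hc⟩
      · exfalso
        apply hne
        have := (hstab (β⁻¹ * α)).mpr h
        rw [mul_smul, inv_smul_eq_iff] at this
        exact this
      · refine ⟨c, ?_⟩
        ext
        rw [← mul_smul_comm] at hc
        exact mul_left_cancel₀ (Units.ne_zero _) hc
    constructor
    · let α : Mˣ := Units.mk0 (y / x) (div_ne_zero hy0 hx0)
      have hne : α • W0 ≠ W0 := by
        intro h
        obtain ⟨c, hc⟩ := (hstab α).mp h
        apply hxy c
        rw [Algebra.smul_def, hc]
        simp [α, hx0]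
      refine ⟨α • W0, hCorb ▸ ⟨α, rfl⟩, W0, hCorb ▸ ⟨1, one_smul _ _⟩, hne, ?_⟩
      have h1 := hle α 1 (by rwa [one_smul])
      rw [one_smul] at h1
      have hymem : y ∈ (α • W0 ⊓ W0 : Submodule K M) := by
        refine Submodule.mem_inf.mpr ⟨?_, hy⟩
        rw [aux_mem_smul]
        exact ⟨x, hx, by simp [α, hx0]⟩
      have h2 : 0 < Module.finrank K (α • W0 ⊓ W0 : Submodule K M) := by
        rw [Module.finrank_pos_iff_exists_ne_zero]
        exact ⟨⟨y, hymem⟩, by simpa [Subtype.ext_iff] using hy0⟩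
      rw [aux_smul_finrank, hr]
      omega
    · rintro r ⟨U, hU, W, hW, hne, rfl⟩
      rw [hCorb] at hU hW
      obtain ⟨α, rfl⟩ := hU
      obtain ⟨β, rfl⟩ := hW
      have h1 := hle α β hne
      change 2 * k - 2 ≤ Module.finrank K (α • W0 : Submodule K M)
        + Module.finrank K (β • W0 : Submodule K M)
        - 2 * Module.finrank K (α • W0 ⊓ β • W0 : Submodule K M)
      rw [aux_smul_finrank, aux_smul_finrank, hr]
      omega
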